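/- arXiv:1111.6257 — 5 statements merged into one kernel-verified Lean document; each statement's English description precedes it below -/
import Mathlib

section
/- Let H be a separable real Hilbert space, I ⊆ ℝ an interval, and R > 0. Let B_w denote the closed ball {x ∈ H : ‖x‖ ≤ R} with the weak topology of H. Then the space C(I, B_w) of continuous maps from I to B_w, endowed with the compact-open topology (uniform convergence on compact subintervals), is a Polish space (separable and completely metrizable). -/
open Set TopologicalSpace in
theorem aux_locallyCompact (I : Set ℝ) (hI : I.OrdConnected) : LocallyCompactSpace I := by
  apply IsLocallyClosed.locallyCompactSpace
  have h := hI.isPreconnected.mem_intervals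
  simp only [Set.mem_insert_iff, Set.mem_singleton_iff] at h
  rcases h with h|h|h|h|h|h|h|h|h|h <;> rw [h]
  · exact isClosed_Icc.isLocallyClosed
  · exact isLocallyClosed_Ico
  · exact isLocallyClosed_Ioc
  · exact isOpen_Ioo.isLocallyClosed
  · exact isClosed_Ici.isLocallyClosed
  · exact isOpen_Ioi.isLocallyClosed
  · exact isClosed_Iic.isLocallyClosed
  · exact isOpen_Iio.isLocallyClosed
  · exact isOpen_univ.isLocallyClosed
  · exact isOpen_empty.isLocallyClosed

theorem aux_compact {H : Type*} [NormedAddCommGroup H] [InnerProductSpace ℝ H] [CompleteSpace H]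
    (R : ℝ) : CompactSpace {x : WeakSpace ℝ H // ‖(toWeakSpace ℝ H).symm x‖ ≤ R} := by
  let ψ : WeakDual ℝ H → WeakSpace ℝ H := fun g =>
    toWeakSpace ℝ H ((InnerProductSpace.toDual ℝ H).symm (WeakDual.toStrongDual g))
  have hψ : Continuous ψ := by
    refine WeakBilin.continuous_of_continuous_eval _ fun f => ?_
    have : (fun g : WeakDual ℝ H => g ((InnerProductSpace.toDual ℝ H).symm f)) =
        fun g => ((topDualPairing ℝ H).flip (ψ g)) f := by
      funext g
      change _ = f ((InnerProductSpace.toDual ℝ H).symm (WeakDual.toStrongDual g))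
      rw [← InnerProductSpace.toDual_symm_apply (y := f), real_inner_comm,
        InnerProductSpace.toDual_symm_apply]
      rfl
    rw [← this]
    exact WeakDual.eval_continuous _
  have hc := (WeakDual.isCompact_closedBall (𝕜 := ℝ) (E := H) 0 R).image hψ
  refine isCompact_iff_compactSpace.mp (?_ : IsCompact {x : WeakSpace ℝ H | ‖(toWeakSpace ℝ H).symm x‖ ≤ R})
  convert hc using 1
  ext x
  simp only [Set.mem_ofPred_eq, Set.mem_image, Set.mem_preimage, mem_closedBall_zero_iff]
  constructor
  · intro hx
    refine ⟨StrongDual.toWeakDual (InnerProductSpace.toDual ℝ H ((toWeakSpace ℝ H).symm x)), ?_, ?_⟩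
    · simpa using hx
    · simp [ψ]
  · rintro ⟨g, hg, rfl⟩
    simpa [ψ] using hg

theorem aux_metrizable {H : Type*} [NormedAddCommGroup H] [InnerProductSpace ℝ H] [CompleteSpace H]
    [TopologicalSpace.SeparableSpace H] (R : ℝ) :
    TopologicalSpace.MetrizableSpace {x : WeakSpace ℝ H // ‖(toWeakSpace ℝ H).symm x‖ ≤ R} := by
  have := aux_compact (H := H) R
  refine Metric.PiNatEmbed.TopologicalSpace.MetrizableSpace.of_countable_separating
    (fun (n : ℕ) x => inner ℝ (TopologicalSpace.denseSeq H n) ((toWeakSpace ℝ H).symm x.1))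
    (fun n => ?_) fun x y hxy => ?_
  · exact (WeakBilin.eval_continuous (topDualPairing ℝ H).flip
      (InnerProductSpace.toDual ℝ H (TopologicalSpace.denseSeq H n))).comp continuous_subtype_val
  · contrapose! hxy
    apply Subtype.ext
    apply (toWeakSpace ℝ H).symm.injective
    refine ext_inner_left ℝ fun v => ?_
    refine congrFun ((TopologicalSpace.denseRange_denseSeq H).equalizer
      (g := fun v => inner ℝ v ((toWeakSpace ℝ H).symm x.1))
      (h := fun v => inner ℝ v ((toWeakSpace ℝ H).symm y.1)) (by fun_prop) (by fun_prop)
      (funext hxy)) v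

theorem aux_polish (X B : Type*) [TopologicalSpace X] [LocallyCompactSpace X] [T2Space X]
    [SecondCountableTopology X] [TopologicalSpace B] [CompactSpace B]
    [TopologicalSpace.MetrizableSpace B] : PolishSpace C(X, B) := by
  letI := TopologicalSpace.metrizableSpaceMetric B
  have : TopologicalSpace.MetrizableSpace C(X, B) := UniformSpace.metrizableSpace
  infer_instance

/-- Let `H` be a separable real Hilbert space, `I ⊆ ℝ` an interval, `R > 0`,
and let `B_w` be the closed ball of radius `R` in `H` with the weak topology.  Then
`C(I, B_w)` with the compact-open topology is a Polish space. -/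
theorem polishSpace_continuousMap_weak_ball
    {H : Type*} [NormedAddCommGroup H] [InnerProductSpace ℝ H] [CompleteSpace H]
    [TopologicalSpace.SeparableSpace H]
    (I : Set ℝ) (hI : I.OrdConnected) (R : ℝ) (hR : 0 < R) :
    PolishSpace C(I, {x : WeakSpace ℝ H // ‖(toWeakSpace ℝ H).symm x‖ ≤ R}) := by
  have := aux_locallyCompact I hI
  have := aux_compact (H := H) R
  have := aux_metrizable (H := H) R
  exact aux_polish I _
end

section
/- Let H be a separable real Hilbert space and let I ⊆ ℝ be an interval that is closed and bounded on the left, with left endpoint t₀ ∈ I. Define Ψ(u, t) = (t − t₀)⁻¹ ∫_{t₀}^{t} (‖u(s)‖² − ‖u(t₀)‖²) ds for u ∈ C(I, H_w) and t ∈ I with t > t₀. Then Ψ is a Borel measurable function on the product space C(I, H_w) × (I ∖ {t₀}). -/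
open scoped Classical

open MeasureTheory

theorem psi_aux_pair {H : Type*} [NormedAddCommGroup H] [InnerProductSpace ℝ H] [CompleteSpace H]
    (I : Set ℝ) [MeasurableSpace C(I, WeakSpace ℝ H)] [BorelSpace C(I, WeakSpace ℝ H)] (h : H) :
    Measurable (fun p : C(I, WeakSpace ℝ H) × I =>
      inner ℝ h ((toWeakSpace ℝ H).symm (p.1 p.2))) := by
  have hc : Continuous (fun x : WeakSpace ℝ H => inner ℝ h ((toWeakSpace ℝ H).symm x)) :=
    WeakBilin.eval_continuous (topDualPairing ℝ H).flip (innerSL ℝ h)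
  have := measurable_uncurry_of_continuous_of_measurable
    (u := fun (s : I) (u : C(I, WeakSpace ℝ H)) => inner ℝ h ((toWeakSpace ℝ H).symm (u s)))
    (fun u => hc.comp u.continuous)
    (fun s => (hc.comp (continuous_eval_const s)).measurable)
  exact this.comp measurable_swap

theorem psi_aux_norm {H : Type*} [NormedAddCommGroup H] [InnerProductSpace ℝ H] [CompleteSpace H]
    [TopologicalSpace.SeparableSpace H]
    (I : Set ℝ) [MeasurableSpace C(I, WeakSpace ℝ H)] [BorelSpace C(I, WeakSpace ℝ H)] :
    Measurable (fun p : C(I, WeakSpace ℝ H) × I =>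
      ‖(toWeakSpace ℝ H).symm (p.1 p.2)‖ ^ 2) := by
  have key : ∀ x h : H, 2 * inner ℝ h x - ‖h‖ ^ 2 = ‖x‖ ^ 2 - ‖h - x‖ ^ 2 := by
    intro x h
    rw [norm_sub_sq_real]; ring
  refine Measurable.isLUB (f := fun (n : ℕ) (p : C(I, WeakSpace ℝ H) × I) =>
    2 * inner ℝ (TopologicalSpace.denseSeq H n) ((toWeakSpace ℝ H).symm (p.1 p.2))
      - ‖TopologicalSpace.denseSeq H n‖ ^ 2)
    (fun n => ((psi_aux_pair I _).const_mul 2).sub_const _) ?_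
  intro p
  generalize (toWeakSpace ℝ H).symm (p.1 p.2) = x
  constructor
  · rintro _ ⟨n, rfl⟩
    simp only [key]
    nlinarith [sq_nonneg ‖TopologicalSpace.denseSeq H n - x‖]
  · intro b hb
    have hcl : IsClosed {y : H | ‖x‖ ^ 2 - ‖y - x‖ ^ 2 ≤ b} :=
      isClosed_le (by fun_prop) continuous_const
    have hall : ∀ y : H, ‖x‖ ^ 2 - ‖y - x‖ ^ 2 ≤ b := by
      intro y
      refine (TopologicalSpace.denseRange_denseSeq H).induction_on y hcl ?_
      intro n
      rw [← key]
      exact hb ⟨n, rfl⟩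
    simpa using hall x

/-- Let `H` be a separable real Hilbert space and `I ⊆ ℝ` an interval which
is closed and bounded on the left, with left endpoint `t₀ ∈ I`.  The function
`Ψ(u, t) = (t - t₀)⁻¹ ∫_{t₀}^{t} (‖u s‖² - ‖u t₀‖²) ds` is Borel measurable on
`C(I, H_w) × (I \ {t₀})`. -/
theorem psi_measurable
    {H : Type*} [NormedAddCommGroup H] [InnerProductSpace ℝ H] [CompleteSpace H]
    [TopologicalSpace.SeparableSpace H]
    (I : Set ℝ) (hI : I.OrdConnected)
    (t₀ : ℝ) (ht₀ : t₀ ∈ I) (hleft : ∀ t ∈ I, t₀ ≤ t)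
    [MeasurableSpace C(I, WeakSpace ℝ H)] [BorelSpace C(I, WeakSpace ℝ H)] :
    Measurable (fun p : C(I, WeakSpace ℝ H) × ↥(I \ {t₀}) =>
      (p.2.1 - t₀)⁻¹ *
        ∫ s in t₀..p.2.1,
          (if h : s ∈ I then
              ‖(toWeakSpace ℝ H).symm (p.1 ⟨s, h⟩)‖ ^ 2 -
                ‖(toWeakSpace ℝ H).symm (p.1 ⟨t₀, ht₀⟩)‖ ^ 2
            else 0)) := by
  have hmI : MeasurableSet I := hI.measurableSet
  have hN := psi_aux_norm (H := H) I
  have hG : Measurable (fun q : (C(I, WeakSpace ℝ H) × ↥(I \ {t₀})) × ℝ =>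
      (if h : q.2 ∈ I then
              ‖(toWeakSpace ℝ H).symm (q.1.1 ⟨q.2, h⟩)‖ ^ 2 -
                ‖(toWeakSpace ℝ H).symm (q.1.1 ⟨t₀, ht₀⟩)‖ ^ 2
            else 0)) := by
    let S : Set ((C(I, WeakSpace ℝ H) × ↥(I \ {t₀})) × ℝ) := {q | q.2 ∈ I}
    have hS : MeasurableSet S := measurable_snd hmI
    refine Measurable.dite (s := S)
      (f := fun q : S => ‖(toWeakSpace ℝ H).symm (q.1.1.1 ⟨q.1.2, q.2⟩)‖ ^ 2 -
                ‖(toWeakSpace ℝ H).symm (q.1.1.1 ⟨t₀, ht₀⟩)‖ ^ 2) (g := fun _ => 0)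
      ?_ measurable_const hS
    have h1 : Measurable (fun q : S => q.1.1.1) :=
      measurable_fst.comp (measurable_fst.comp measurable_subtype_coe)
    have h2 : Measurable (fun q : S => (⟨q.1.2, q.2⟩ : I)) :=
      (measurable_snd.comp measurable_subtype_coe).subtype_mk
    exact (hN.comp (h1.prodMk h2)).sub (hN.comp (h1.prodMk measurable_const))
  have ht : Measurable (fun p : C(I, WeakSpace ℝ H) × ↥(I \ {t₀}) => p.2.1) :=
    measurable_subtype_coe.comp measurable_snd
  refine Measurable.mul (ht.sub_const _).inv ?_
  let T : Set ((C(I, WeakSpace ℝ H) × ↥(I \ {t₀})) × ℝ) := {q | t₀ < q.2 ∧ q.2 ≤ q.1.2.1}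
  have hT : MeasurableSet T :=
    (measurableSet_lt measurable_const measurable_snd).inter
      (measurableSet_le measurable_snd (ht.comp measurable_fst))
  have hint := ((hG.indicator hT).stronglyMeasurable.integral_prod_right' (ν := volume)).measurable
  convert hint using 2 with p
  rw [intervalIntegral.integral_of_le (hleft _ p.2.2.1), ← integral_indicator measurableSet_Ioc]
  rfl
end

section
/- Let H be a separable real Hilbert space and let I ⊆ ℝ be an interval that is closed and bounded on the left, with left endpoint t₀ ∈ I. Then for every u ∈ C(I, H_w), liminf_{t → t₀⁺} (t − t₀)⁻¹ ∫_{t₀}^{t} (‖u(s)‖² − ‖u(t₀)‖²) ds ≥ 0. -/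
open scoped Classical
open MeasureTheory Filter

/-- Let `H` be a separable real Hilbert space and `I ⊆ ℝ` an interval which
is closed and bounded on the left, with left endpoint `t₀ ∈ I`.  Then for every
`u ∈ C(I, H_w)`, `liminf_{t → t₀⁺} (t - t₀)⁻¹ ∫_{t₀}^{t} (‖u s‖² - ‖u t₀‖²) ds ≥ 0`. -/
theorem psi_liminf_nonneg
    {H : Type*} [NormedAddCommGroup H] [InnerProductSpace ℝ H] [CompleteSpace H]
    [TopologicalSpace.SeparableSpace H]
    (I : Set ℝ) (hI : I.OrdConnected)
    (t₀ : ℝ) (ht₀ : t₀ ∈ I) (hleft : ∀ t ∈ I, t₀ ≤ t)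
    (u : C(I, WeakSpace ℝ H)) :
    0 ≤ Filter.liminf (fun t : ℝ =>
        (t - t₀)⁻¹ *
          ∫ s in t₀..t,
            (if h : s ∈ I then
                ‖(toWeakSpace ℝ H).symm (u ⟨s, h⟩)‖ ^ 2 -
                  ‖(toWeakSpace ℝ H).symm (u ⟨t₀, ht₀⟩)‖ ^ 2
              else 0))
        (nhdsWithin t₀ (I ∩ Set.Ioi t₀)) := by
  set g : ℝ → ℝ := fun s => if h : s ∈ I then
                ‖(toWeakSpace ℝ H).symm (u ⟨s, h⟩)‖ ^ 2 -
                  ‖(toWeakSpace ℝ H).symm (u ⟨t₀, ht₀⟩)‖ ^ 2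
              else 0 with hg
  -- pointwise lower bound near `t₀` (weak lower semicontinuity of the norm)
  have key : ∀ ε : ℝ, 0 < ε → ∃ δ > 0, ∀ s, |s - t₀| < δ → -ε ≤ g s := by
    intro ε hε
    set v : H := (toWeakSpace ℝ H).symm (u ⟨t₀, ht₀⟩) with hv
    have hc : Continuous (fun s : I => inner ℝ v ((toWeakSpace ℝ H).symm (u s))) :=
      (WeakBilin.eval_continuous (topDualPairing ℝ H).flip (innerSL ℝ v)).comp u.continuous
    obtain ⟨δ, hδ, hd⟩ := Metric.continuous_iff.1 hc ⟨t₀, ht₀⟩ (ε / 2) (half_pos hε)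
    refine ⟨δ, hδ, fun s hs => ?_⟩
    by_cases h : s ∈ I
    · have h1 := hd ⟨s, h⟩ (by simpa [Subtype.dist_eq, Real.dist_eq] using hs)
      rw [Real.dist_eq, abs_lt] at h1
      have h2 : g s = ‖(toWeakSpace ℝ H).symm (u ⟨s, h⟩)‖ ^ 2 - ‖v‖ ^ 2 := by
        simp only [hg, dif_pos h, hv]
      rw [h2]
      have h3 := h1.1
      rw [← hv, real_inner_self_eq_norm_sq] at h3
      have h4 := real_inner_le_norm v ((toWeakSpace ℝ H).symm (u ⟨s, h⟩))
      nlinarith [sq_nonneg (‖v‖ - ‖(toWeakSpace ℝ H).symm (u ⟨s, h⟩)‖)]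
    · simp only [hg, dif_neg h]
      linarith
  have key2 : ∀ ε : ℝ, 0 < ε → ∀ᶠ t in nhdsWithin t₀ (I ∩ Set.Ioi t₀),
      -ε ≤ (t - t₀)⁻¹ * ∫ s in t₀..t, g s := by
    intro ε hε
    obtain ⟨δ, hδ, hd⟩ := key ε hε
    filter_upwards [self_mem_nhdsWithin,
      mem_nhdsWithin_of_mem_nhds (Metric.ball_mem_nhds t₀ hδ)] with t ht htb
    have hlt : t₀ < t := ht.2
    have hpos : 0 < t - t₀ := sub_pos.2 hlt
    rw [Metric.mem_ball, Real.dist_eq, abs_of_pos hpos] at htb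
    by_cases hi : IntervalIntegrable g volume t₀ t
    · have hm : ∫ s in t₀..t, (-ε) ≤ ∫ s in t₀..t, g s := by
        refine intervalIntegral.integral_mono_on hlt.le (by simp) hi fun s hs => hd s ?_
        rw [abs_of_nonneg (sub_nonneg.2 hs.1)]
        linarith [hs.2]
      rw [intervalIntegral.integral_const, smul_eq_mul] at hm
      rw [inv_mul_eq_div, le_div_iff₀ hpos]
      linarith
    · rw [intervalIntegral.integral_undef hi]
      linarith
  rw [Filter.liminf_eq]
  by_cases hb : BddAbove {a : ℝ | ∀ᶠ t in nhdsWithin t₀ (I ∩ Set.Ioi t₀),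
      a ≤ (t - t₀)⁻¹ * ∫ s in t₀..t, g s}
  · refine le_of_forall_pos_le_add fun ε hε => ?_
    have := le_csSup hb (key2 ε hε)
    linarith
  · rw [Real.sSup_of_not_bddAbove hb]
end

section
/- Let H be a separable real Hilbert space and let I ⊆ ℝ be an interval that is closed and bounded on the left, with left endpoint t₀ ∈ I. Then the function u ↦ liminf_{t → t₀⁺} (t − t₀)⁻¹ ∫_{t₀}^{t} (‖u(s)‖² − ‖u(t₀)‖²) ds is Borel measurable on C(I, H_w). -/
open scoped Classical
open MeasureTheory Filter

lemma psi_norm_sq_le_iff {H : Type*} [NormedAddCommGroup H] [InnerProductSpace ℝ H]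
    [TopologicalSpace.SeparableSpace H] (x : H) (c : ℝ) :
    ‖x‖ ^ 2 ≤ c ↔ ∀ n : ℕ, 2 * inner ℝ (TopologicalSpace.denseSeq H n) x
      - ‖TopologicalSpace.denseSeq H n‖ ^ 2 ≤ c := by
  constructor
  · intro h n
    have h1 := norm_sub_sq_real (TopologicalSpace.denseSeq H n) x
    nlinarith [sq_nonneg ‖TopologicalSpace.denseSeq H n - x‖]
  · intro h
    have h1 : ∀ y : H, 2 * inner ℝ y x - ‖y‖ ^ 2 ≤ c := by
      intro y
      refine (TopologicalSpace.denseRange_denseSeq H).induction_on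
        (p := fun y => 2 * inner ℝ y x - ‖y‖ ^ 2 ≤ c) y ?_ h
      exact isClosed_le (by fun_prop) continuous_const
    have h2 := h1 x
    rw [real_inner_self_eq_norm_sq] at h2
    linarith

lemma psi_weak_inner_continuous {H : Type*} [NormedAddCommGroup H] [InnerProductSpace ℝ H]
    (y : H) : Continuous (fun x : WeakSpace ℝ H => inner ℝ y ((toWeakSpace ℝ H).symm x)) :=
  WeakBilin.eval_continuous (topDualPairing ℝ H).flip (innerSL ℝ y)

lemma psi_joint {H : Type*} [NormedAddCommGroup H] [InnerProductSpace ℝ H]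
    [TopologicalSpace.SeparableSpace H] (I : Set ℝ)
    [MeasurableSpace C(I, WeakSpace ℝ H)] [BorelSpace C(I, WeakSpace ℝ H)] :
    Measurable (fun p : I × C(I, WeakSpace ℝ H) =>
      ‖(toWeakSpace ℝ H).symm (p.2 p.1)‖ ^ 2) := by
  have key : ∀ y : H, Measurable (fun p : I × C(I, WeakSpace ℝ H) =>
      inner ℝ y ((toWeakSpace ℝ H).symm (p.2 p.1))) := by
    intro y
    refine measurable_uncurry_of_continuous_of_measurable
      (u := fun (s : I) (u : C(I, WeakSpace ℝ H)) => inner ℝ y ((toWeakSpace ℝ H).symm (u s)))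
      ?_ ?_
    · intro u
      exact (psi_weak_inner_continuous y).comp u.continuous
    · intro s
      exact ((psi_weak_inner_continuous y).comp (continuous_eval_const s)).measurable
  refine measurable_of_Iic fun c => ?_
  have : (fun p : I × C(I, WeakSpace ℝ H) => ‖(toWeakSpace ℝ H).symm (p.2 p.1)‖ ^ 2) ⁻¹' Set.Iic c
      = ⋂ n : ℕ, {p | 2 * inner ℝ (TopologicalSpace.denseSeq H n)
          ((toWeakSpace ℝ H).symm (p.2 p.1)) - ‖TopologicalSpace.denseSeq H n‖ ^ 2 ≤ c} := by
    ext p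
    simp only [Set.mem_preimage, Set.mem_Iic, Set.mem_iInter, Set.mem_ofPred_eq]
    exact psi_norm_sq_le_iff _ c
  rw [this]
  exact MeasurableSet.iInter fun n =>
    measurableSet_le (((key _).const_mul 2).sub_const _) measurable_const

lemma psi_integrand {H : Type*} [NormedAddCommGroup H] [InnerProductSpace ℝ H]
    [TopologicalSpace.SeparableSpace H] (I : Set ℝ) (hI : I.OrdConnected)
    (t₀ : ℝ) (ht₀ : t₀ ∈ I)
    [MeasurableSpace C(I, WeakSpace ℝ H)] [BorelSpace C(I, WeakSpace ℝ H)] :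
    Measurable (fun p : C(I, WeakSpace ℝ H) × ℝ =>
      if h : p.2 ∈ I then ‖(toWeakSpace ℝ H).symm (p.1 ⟨p.2, h⟩)‖ ^ 2 -
                    ‖(toWeakSpace ℝ H).symm (p.1 ⟨t₀, ht₀⟩)‖ ^ 2 else 0) := by
  have hm : MeasurableSet {p : C(I, WeakSpace ℝ H) × ℝ | p.2 ∈ I} :=
    measurable_snd hI.measurableSet
  refine measurable_of_restrict_of_restrict_compl hm ?_ ?_
  · have : Measurable (fun p : {p : C(I, WeakSpace ℝ H) × ℝ | p.2 ∈ I} =>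
      ‖(toWeakSpace ℝ H).symm (p.1.1 ⟨p.1.2, p.2⟩)‖ ^ 2 -
                    ‖(toWeakSpace ℝ H).symm (p.1.1 ⟨t₀, ht₀⟩)‖ ^ 2) := by
      refine Measurable.sub ?_ ?_
      · exact (psi_joint I).comp (f := fun p : {p : C(I, WeakSpace ℝ H) × ℝ | p.2 ∈ I} =>
          ((⟨p.1.2, p.2⟩ : I), p.1.1))
          (((measurable_snd.comp measurable_subtype_coe).subtype_mk).prodMk
            (measurable_fst.comp measurable_subtype_coe))
      · exact (psi_joint I).comp (f := fun p : {p : C(I, WeakSpace ℝ H) × ℝ | p.2 ∈ I} =>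
          ((⟨t₀, ht₀⟩ : I), p.1.1))
          (measurable_const.prodMk (measurable_fst.comp measurable_subtype_coe))
    convert this using 1
    ext p
    have hp : p.1.2 ∈ I := p.2
    simp [hp]
  · convert measurable_const (a := (0 : ℝ)) using 1
    ext p
    have hp : p.1.2 ∉ I := p.2
    simp [hp]

lemma psi_bound {H : Type*} [NormedAddCommGroup H] [InnerProductSpace ℝ H] [CompleteSpace H]
    (I : Set ℝ) (hI : I.OrdConnected) (t₀ b : ℝ) (ht₀ : t₀ ∈ I) (hb : b ∈ I)
    (u : C(I, WeakSpace ℝ H)) :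
    ∃ C : ℝ, ∀ s (h : s ∈ I), s ∈ Set.Icc t₀ b → ‖(toWeakSpace ℝ H).symm (u ⟨s, h⟩)‖ ≤ C := by
  have hsub : Set.Icc t₀ b ⊆ I := hI.out ht₀ hb
  obtain ⟨C, hC⟩ := banach_steinhaus (ι := Set.Icc t₀ b)
    (g := fun s => innerSL ℝ ((toWeakSpace ℝ H).symm (u ⟨s.1, hsub s.2⟩))) (by
      intro y
      have hc : Continuous (fun s : Set.Icc t₀ b =>
          inner ℝ y ((toWeakSpace ℝ H).symm (u ⟨s.1, hsub s.2⟩))) :=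
        (psi_weak_inner_continuous y).comp (u.continuous.comp (by fun_prop))
      obtain ⟨C, hC⟩ := isCompact_univ.exists_bound_of_continuousOn hc.continuousOn
      refine ⟨C, fun s => ?_⟩
      have := hC s (Set.mem_univ _)
      rw [innerSL_apply_apply, real_inner_comm]
      exact this)
  refine ⟨C, fun s h hs => ?_⟩
  have := hC ⟨s, hs⟩
  rwa [innerSL_apply_norm] at this

lemma psi_integrable {H : Type*} [NormedAddCommGroup H] [InnerProductSpace ℝ H] [CompleteSpace H]
    [TopologicalSpace.SeparableSpace H] (I : Set ℝ) (hI : I.OrdConnected)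
    (t₀ b : ℝ) (ht₀ : t₀ ∈ I) (hb : b ∈ I)
    [MeasurableSpace C(I, WeakSpace ℝ H)] [BorelSpace C(I, WeakSpace ℝ H)]
    (u : C(I, WeakSpace ℝ H)) :
    IntegrableOn (fun s : ℝ =>
      if h : s ∈ I then ‖(toWeakSpace ℝ H).symm (u ⟨s, h⟩)‖ ^ 2 -
                    ‖(toWeakSpace ℝ H).symm (u ⟨t₀, ht₀⟩)‖ ^ 2 else 0) (Set.Icc t₀ b) := by
  obtain ⟨C, hC⟩ := psi_bound I hI t₀ b ht₀ hb u
  refine IntegrableOn.of_bound (C := C ^ 2 + ‖(toWeakSpace ℝ H).symm (u ⟨t₀, ht₀⟩)‖ ^ 2)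
    measure_Icc_lt_top
    ((psi_integrand I hI t₀ ht₀).comp (measurable_const.prodMk measurable_id)
      |>.aestronglyMeasurable (f := fun s : ℝ => _)) ?_
  refine ae_restrict_of_forall_mem measurableSet_Icc fun s hs => ?_
  have h : s ∈ I := hI.out ht₀ hb hs
  have h1 := hC s h hs
  simp only [h, dite_true]
  have h2 := norm_nonneg ((toWeakSpace ℝ H).symm (u ⟨s, h⟩))
  rw [Real.norm_eq_abs, abs_le]
  constructor <;> nlinarith [sq_nonneg ‖(toWeakSpace ℝ H).symm (u ⟨t₀, ht₀⟩)‖]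

lemma psi_liminf_rat (f : ℝ → ℝ) (I : Set ℝ) (hI : I.OrdConnected) (t₀ : ℝ) (ht₀ : t₀ ∈ I)
    (hf : ∀ t ∈ I, t₀ < t → ContinuousOn f (Set.Ioc t₀ t)) :
    liminf f (nhdsWithin t₀ (I ∩ Set.Ioi t₀)) =
      liminf f (nhdsWithin t₀ ((I ∩ Set.Ioi t₀) ∩ Set.range ((↑) : ℚ → ℝ))) := by
  rw [liminf_eq, liminf_eq]
  congr 1
  ext a
  simp only [Set.mem_ofPred_eq]
  constructor
  · intro h
    exact h.filter_mono (nhdsWithin_mono _ Set.inter_subset_left)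
  · intro h
    rw [eventually_nhdsWithin_iff, Metric.eventually_nhds_iff] at h ⊢
    obtain ⟨ε, hε, h⟩ := h
    refine ⟨ε, hε, fun t ht hts => ?_⟩
    obtain ⟨htI, htt⟩ := hts
    have htt : t₀ < t := htt
    have hcl : t ∈ closure (Set.Ioo t₀ t ∩ Set.range ((↑) : ℚ → ℝ)) := by
      have h1 : Set.Ioo t₀ t ⊆ closure (Set.Ioo t₀ t ∩ Set.range ((↑) : ℚ → ℝ)) :=
        Rat.denseRange_cast.open_subset_closure_inter isOpen_Ioo
      have h2 := closure_minimal h1 isClosed_closure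
      apply h2
      rw [closure_Ioo htt.ne]
      exact ⟨htt.le, le_rfl⟩
    refine ContinuousWithinAt.closure_le (f := fun _ => a) (g := f) hcl
      continuousWithinAt_const ?_ ?_
    · exact (hf t htI htt t ⟨htt, le_rfl⟩).mono fun y hy => ⟨hy.1.1, hy.1.2.le⟩
    · rintro y ⟨⟨hy1, hy2⟩, hy3⟩
      refine h ?_ ⟨⟨hI.out ht₀ htI ⟨hy1.le, hy2.le⟩, hy1⟩, hy3⟩
      rw [Real.dist_eq, abs_lt] at ht ⊢
      constructor <;> linarith

/-- Let `H` be a separable real Hilbert space and `I ⊆ ℝ` an interval which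
is closed and bounded on the left, with left endpoint `t₀ ∈ I`.  Then the function
`u ↦ liminf_{t → t₀⁺} (t - t₀)⁻¹ ∫_{t₀}^{t} (‖u s‖² - ‖u t₀‖²) ds` is Borel measurable on
`C(I, H_w)`. -/
theorem psi_liminf_measurable
    {H : Type*} [NormedAddCommGroup H] [InnerProductSpace ℝ H] [CompleteSpace H]
    [TopologicalSpace.SeparableSpace H]
    (I : Set ℝ) (hI : I.OrdConnected)
    (t₀ : ℝ) (ht₀ : t₀ ∈ I) (hleft : ∀ t ∈ I, t₀ ≤ t)
    [MeasurableSpace C(I, WeakSpace ℝ H)] [BorelSpace C(I, WeakSpace ℝ H)] :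
    Measurable (fun u : C(I, WeakSpace ℝ H) =>
      Filter.liminf (fun t : ℝ =>
          (t - t₀)⁻¹ *
            ∫ s in t₀..t,
              (if h : s ∈ I then
                  ‖(toWeakSpace ℝ H).symm (u ⟨s, h⟩)‖ ^ 2 -
                    ‖(toWeakSpace ℝ H).symm (u ⟨t₀, ht₀⟩)‖ ^ 2
                else 0))
          (nhdsWithin t₀ (I ∩ Set.Ioi t₀))) := by
  have hcont : ∀ u : C(I, WeakSpace ℝ H), ∀ t ∈ I, t₀ < t → ContinuousOn (fun t : ℝ =>
          (t - t₀)⁻¹ *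
            ∫ s in t₀..t,
              (if h : s ∈ I then
                  ‖(toWeakSpace ℝ H).symm (u ⟨s, h⟩)‖ ^ 2 -
                    ‖(toWeakSpace ℝ H).symm (u ⟨t₀, ht₀⟩)‖ ^ 2
                else 0)) (Set.Ioc t₀ t) := by
    intro u t htI htt
    refine ContinuousOn.mul ?_ ?_
    · refine ContinuousOn.inv₀ (by fun_prop) fun x hx => ?_
      exact (sub_pos.2 hx.1).ne'
    · refine (intervalIntegral.continuousOn_primitive_interval (b := t) ?_).mono ?_
      · rw [Set.uIcc_of_le htt.le]
        exact psi_integrable I hI t₀ t ht₀ htI u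
      · rw [Set.uIcc_of_le htt.le]
        exact Set.Ioc_subset_Icc_self
  have heq := fun u => psi_liminf_rat _ I hI t₀ ht₀ (hcont u)
  simp only [heq]
  obtain ⟨x, hx⟩ := (nhds t₀).exists_antitone_basis
  refine Measurable.liminf' (p := fun _ : ℕ => True)
    (s := fun n => x n ∩ ((I ∩ Set.Ioi t₀) ∩ Set.range ((↑) : ℚ → ℝ))) ?_
    ⟨nhdsWithin_hasBasis hx.toHasBasis _, Set.to_countable _⟩ ?_
  · intro t
    refine Measurable.const_mul ?_ _
    have hm := (psi_integrand (H := H) I hI t₀ ht₀).stronglyMeasurable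
    simp only [intervalIntegral]
    exact (hm.integral_prod_right (ν := volume.restrict (Set.Ioc t₀ t))).measurable.sub
      (hm.integral_prod_right (ν := volume.restrict (Set.Ioc t t₀))).measurable
  · intro n
    exact (Set.countable_range _).mono fun y hy => hy.2.2
end

section
/- Let H be a separable real Hilbert space, I ⊆ ℝ an interval, and J ⊆ I a subinterval that is closed in I (in the subspace topology of I). Then the restriction map Π_J : C(I, H_w) → C(J, H_w), defined by (Π_J u)(t) = u(t) for t ∈ J, is continuous, surjective, and open (it maps open sets of C(I, H_w) to open sets of C(J, H_w)). -/
/-- A nonempty subinterval `J` that is closed in the interval `I` is a retract of `I`. -/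
theorem exists_interval_retraction (I J : Set ℝ) (hI : I.OrdConnected) (hJ : J.OrdConnected)
    (hJI : J ⊆ I) (hne : J.Nonempty) (hJclosed : IsClosed (Subtype.val ⁻¹' J : Set I)) :
    ∃ r : C(I, J), ∀ x : J, r (Set.inclusion hJI x) = x := by
  obtain ⟨C, hC, hCJ⟩ := isClosed_induced_iff.mp hJclosed
  have hmem : ∀ x ∈ I, x ∈ C → x ∈ J := fun x hx hxC => by
    have : (⟨x, hx⟩ : I) ∈ (Subtype.val ⁻¹' C : Set I) := hxC
    rw [hCJ] at this
    exact this
  have hJC : J ⊆ C := fun x hx => by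
    have : (⟨x, hJI hx⟩ : I) ∈ (Subtype.val ⁻¹' J : Set I) := hx
    rw [← hCJ] at this
    exact this
  have ex : ∀ t : I, ∃ p : J, ((t : ℝ) < p → ∀ x ∈ J, (p : ℝ) ≤ x) ∧
      ((p : ℝ) < t → ∀ x ∈ J, x ≤ p) := by
    rintro ⟨t, ht⟩
    by_cases htJ : t ∈ J
    · exact ⟨⟨t, htJ⟩, fun h => absurd h (lt_irrefl _), fun h => absurd h (lt_irrefl _)⟩
    obtain ⟨x, hx⟩ := hne
    rcases lt_or_gt_of_ne (fun h : x = t => htJ (h ▸ hx)) with hxt | hxt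
    · have hub : ∀ y ∈ J, y ≤ t := fun y hy => by
        by_contra hlt
        exact htJ (hJ.out hx hy ⟨hxt.le, (not_le.mp hlt).le⟩)
      have hb : BddAbove J := ⟨t, hub⟩
      have h1 : x ≤ sSup J := le_csSup hb hx
      have h2 : sSup J ≤ t := csSup_le ⟨x, hx⟩ hub
      have h3 : sSup J ∈ J := hmem _ (hI.out (hJI hx) ht ⟨h1, h2⟩)
        (closure_minimal hJC hC (csSup_mem_closure ⟨x, hx⟩ hb))
      exact ⟨⟨sSup J, h3⟩, fun h => absurd h (not_lt.mpr h2), fun _ y hy => le_csSup hb hy⟩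
    · have hlb : ∀ y ∈ J, t ≤ y := fun y hy => by
        by_contra hlt
        exact htJ (hJ.out hy hx ⟨(not_le.mp hlt).le, hxt.le⟩)
      have hb : BddBelow J := ⟨t, hlb⟩
      have h1 : sInf J ≤ x := csInf_le hb hx
      have h2 : t ≤ sInf J := le_csInf ⟨x, hx⟩ hlb
      have h3 : sInf J ∈ J := hmem _ (hI.out ht (hJI hx) ⟨h2, h1⟩)
        (closure_minimal hJC hC (csInf_mem_closure ⟨x, hx⟩ hb))
      exact ⟨⟨sInf J, h3⟩, fun _ y hy => csInf_le hb hy, fun h => absurd h (not_lt.mpr h2)⟩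
  choose p hp1 hp2 using ex
  have hle : ∀ s t : I, (p t : ℝ) - p s ≤ |(t : ℝ) - s| := by
    intro s t
    by_cases h : (p t : ℝ) ≤ p s
    · exact (sub_nonpos.mpr h).trans (abs_nonneg _)
    · have h1 : (p t : ℝ) ≤ t := by
        by_contra hc
        exact h (hp1 t (not_le.mp hc) _ (p s).2)
      have h2 : (s : ℝ) ≤ p s := by
        by_contra hc
        exact h (hp2 s (not_le.mp hc) _ (p t).2)
      exact (by linarith : (p t : ℝ) - p s ≤ t - s).trans (le_abs_self _)
  have hlip : LipschitzWith 1 p := LipschitzWith.of_dist_le_mul fun s t => by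
    rw [Subtype.dist_eq, Subtype.dist_eq, Real.dist_eq, Real.dist_eq, NNReal.coe_one, one_mul]
    refine abs_le.mpr ⟨?_, hle t s⟩
    have := hle s t
    rw [abs_sub_comm] at this
    linarith
  refine ⟨⟨p, hlip.continuous⟩, fun x => ?_⟩
  apply Subtype.ext
  change (p (Set.inclusion hJI x) : ℝ) = x
  rcases lt_trichotomy (p (Set.inclusion hJI x) : ℝ) x with h | h | h
  · exact absurd (hp2 (Set.inclusion hJI x) h _ x.2) (not_le.mpr h)
  · exact h
  · exact absurd (hp1 (Set.inclusion hJI x) h _ x.2) (not_le.mpr h)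

/-- Let `H` be a separable real Hilbert space, `I ⊆ ℝ` an interval, and
`J ⊆ I` a subinterval which is closed in `I`.  Then the restriction map
`Π_J : C(I, H_w) → C(J, H_w)`, `(Π_J u) t = u t` for `t ∈ J`, is continuous, surjective,
and open. -/
theorem restriction_continuous_surjective_open
    {H : Type*} [NormedAddCommGroup H] [InnerProductSpace ℝ H] [CompleteSpace H]
    [TopologicalSpace.SeparableSpace H]
    (I J : Set ℝ) (hI : I.OrdConnected) (hJ : J.OrdConnected) (hJI : J ⊆ I)
    (hJclosed : IsClosed (Subtype.val ⁻¹' J : Set I)) :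
    Continuous (fun u : C(I, WeakSpace ℝ H) =>
        u.comp (ContinuousMap.inclusion hJI)) ∧
      Function.Surjective (fun u : C(I, WeakSpace ℝ H) =>
        u.comp (ContinuousMap.inclusion hJI)) ∧
      IsOpenMap (fun u : C(I, WeakSpace ℝ H) =>
        u.comp (ContinuousMap.inclusion hJI)) := by
  classical
  have hcont : Continuous (fun u : C(I, WeakSpace ℝ H) =>
      u.comp (ContinuousMap.inclusion hJI)) := ContinuousMap.continuous_precomp _
  haveI : IsTopologicalAddGroup (WeakSpace ℝ H) :=
    inferInstanceAs (IsTopologicalAddGroup (WeakBilin (topDualPairing ℝ H).flip))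
  have key : ∀ u : C(I, WeakSpace ℝ H), ∃ s : C(J, WeakSpace ℝ H) → C(I, WeakSpace ℝ H),
      Continuous s ∧ (∀ v, (s v).comp (ContinuousMap.inclusion hJI) = v) ∧
      s (u.comp (ContinuousMap.inclusion hJI)) = u := by
    intro u
    rcases J.eq_empty_or_nonempty with hE | hne
    · refine ⟨fun _ => u, continuous_const, fun v => ?_, rfl⟩
      ext x
      exact absurd x.2 (by simp [hE])
    · obtain ⟨r, hr⟩ := exists_interval_retraction I J hI hJ hJI hne hJclosed
      refine ⟨fun v => u + (v - u.comp (ContinuousMap.inclusion hJI)).comp r, ?_, ?_, ?_⟩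
      · exact continuous_const.add
          ((ContinuousMap.continuous_precomp r).comp (continuous_id.sub continuous_const))
      · intro v
        apply ContinuousMap.ext
        intro x
        have h : r (Set.inclusion hJI x) = x := hr x
        change u (Set.inclusion hJI x) + (v (r (Set.inclusion hJI x))
          - u (Set.inclusion hJI (r (Set.inclusion hJI x)))) = v x
        rw [h]
        abel
      · apply ContinuousMap.ext
        intro x
        change u x + (u (Set.inclusion hJI (r x)) - u (Set.inclusion hJI (r x))) = u x
        simp
  refine ⟨hcont, fun v => ?_, fun U hU => ?_⟩
  · obtain ⟨s, -, h, -⟩ := key 0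
    exact ⟨s v, h v⟩
  · rw [isOpen_iff_mem_nhds]
    rintro _ ⟨u, hu, rfl⟩
    obtain ⟨s, hs, h1, h2⟩ := key u
    refine Filter.mem_of_superset ((hU.preimage hs).mem_nhds ?_) ?_
    · change s _ ∈ U
      rw [h2]
      exact hu
    · intro v hv
      exact ⟨s v, hv, h1 v⟩
end
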